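/- Fix τ ∈ ℍ, z ∈ ℂ, and a₁, a₂ ∈ ℂ with a₁ + a₂ = −2, and assume z ∉ ℤ+τℤ and (a₁+1)z ∉ ℤ+τℤ (equivalently (a₂+1)z = −(a₁+1)z ∉ ℤ+τℤ). For u in a punctured neighborhood of 0 in ℂ, define G(u) = [2u · θ(2u−z)/θ(2u)] · ∏_{i=1,2} [θ(u−(aᵢ+1)z)·θ(z) / (θ(u−z)·θ((aᵢ+1)z))]. Then G extends holomorphically across u = 0, and the derivative of this extension at u = 0 vanishes: G'(0) = 0. -/

import Mathlib

/-!
Put `b = (a₁ + 1) z`, so that `(a₂ + 1) z = -b`. Since `θ` is odd, the factor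
`(2u / θ(2u)) · θ(u - b) θ(u + b)` of `G` is an even function of `u`, and therefore has derivative
zero at `u = 0`. The remaining non-constant factor `θ(2u - z) / θ(u - z)²` has logarithmic
derivative `2 θ'(-z) / θ(-z) - 2 θ'(-z) / θ(-z) = 0` at `u = 0`.

The analytic input is that `θ` is entire, odd, and has a simple zero at `0`
(`differentiable_th`, `th_neg`, `deriv_th_zero_ne_zero`); all three are read off from
`θ(t) = 2 q^{1/8} sin(πt) · A(1) A(e^{2πit}) A(e^{-2πit})` with the entire function
`A(x) = ∏_{n ≥ 1} (1 - qⁿ x)`. The function `2u / θ(2u)` is continued through `u = 0` as the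
inverse of `dslope θ 0 (2u)`. If `θ(z) = 0`, then `G` is
identically zero, and the claim is trivial.
-/

open Complex Topology Filter

/-- `q = e^{2πiτ}`. -/
noncomputable def jq (τ : ℂ) : ℂ := Complex.exp (2 * Real.pi * I * τ)

/-- The Jacobi theta function
`θ(t,τ) = q^{1/8} · 2 sin(πt) · ∏_{n≥1}(1−qⁿ) · ∏_{n≥1}(1−qⁿe^{2πit})(1−qⁿe^{−2πit})`,
where `q^{1/8} = e^{πiτ/4}`. -/
noncomputable def jTheta (t τ : ℂ) : ℂ :=
  Complex.exp (Real.pi * I * τ / 4) * (2 * Complex.sin (Real.pi * t)) *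
    (∏' n : ℕ, (1 - jq τ ^ (n + 1))) *
    (∏' n : ℕ, (1 - jq τ ^ (n + 1) * Complex.exp (2 * Real.pi * I * t)) *
      (1 - jq τ ^ (n + 1) * Complex.exp (-(2 * Real.pi * I * t))))

/-- `θ(t)` with `τ` fixed. -/
noncomputable def th (τ t : ℂ) : ℂ := jTheta t τ

/-- `θ'(0)`, the derivative of `θ(·,τ)` at `t = 0`. -/
noncomputable def thd (τ : ℂ) : ℂ := deriv (fun t => jTheta t τ) 0

/-- Membership in the lattice `ℤ + τℤ`. -/
def inLat (τ t : ℂ) : Prop := ∃ m n : ℤ, t = (m : ℂ) + (n : ℂ) * τ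

/-- `G(u) = [2u·θ(2u−z)/θ(2u)]·∏_{i=1,2}[θ(u−(aᵢ+1)z)θ(z)/(θ(u−z)θ((aᵢ+1)z))]`,
whose derivative at `u = 0` computes the relative elliptic genus
`Ell(ℙ¹, a₁p₁ + a₂p₂; z, τ)`. -/
noncomputable def G₁₅ (τ z a₁ a₂ u : ℂ) : ℂ :=
  (2 * u * th τ (2 * u - z) / th τ (2 * u)) *
  ((th τ (u - (a₁ + 1) * z) * th τ z / (th τ (u - z) * th τ ((a₁ + 1) * z))) *
    (th τ (u - (a₂ + 1) * z) * th τ z / (th τ (u - z) * th τ ((a₂ + 1) * z))))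

/-- The `q`-Pochhammer product `∏_{n ≥ 1} (1 - qⁿ x)`, as a function of `x`. -/
noncomputable def qProd (q x : ℂ) : ℂ := ∏' n : ℕ, (1 - q ^ (n + 1) * x)

lemma norm_jq_lt_one {τ : ℂ} (hτ : 0 < τ.im) : ‖jq τ‖ < 1 :=
  UpperHalfPlane.norm_exp_two_pi_I_lt_one ⟨τ, hτ⟩

lemma summable_norm_qProd_term {q : ℂ} (hq : ‖q‖ < 1) (x : ℂ) :
    Summable fun n : ℕ => ‖-(q ^ (n + 1) * x)‖ := by
  have h : Summable fun n : ℕ => ‖q‖ ^ (n + 1) :=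
    (summable_nat_add_iff 1).mpr (summable_geometric_of_lt_one (norm_nonneg _) hq)
  simpa using h.mul_right ‖x‖

lemma multipliable_qProd {q : ℂ} (hq : ‖q‖ < 1) (x : ℂ) :
    Multipliable fun n : ℕ => 1 - q ^ (n + 1) * x := by
  simpa [sub_eq_add_neg] using multipliable_one_add_of_summable (summable_norm_qProd_term hq x)

lemma qProd_one_ne_zero {q : ℂ} (hq : ‖q‖ < 1) : qProd q 1 ≠ 0 := by
  have h := tprod_one_add_ne_zero_of_summable (f := fun n : ℕ => -(q ^ (n + 1) * 1)) ?_
    (summable_norm_qProd_term hq 1)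
  · simpa [qProd, sub_eq_add_neg] using h
  · intro n h0
    have h1 : q ^ (n + 1) = 1 := by linear_combination -h0
    have h2 : ‖q‖ ^ (n + 1) < 1 := pow_lt_one₀ (norm_nonneg _) hq (by omega)
    rw [← norm_pow, h1, norm_one] at h2
    exact lt_irrefl _ h2

lemma differentiable_qProd {q : ℂ} (hq : ‖q‖ < 1) : Differentiable ℂ (qProd q) := by
  intro x
  set R : ℝ := ‖x‖ + 1
  have hu : Summable fun n : ℕ => ‖q‖ ^ (n + 1) * R :=
    ((summable_nat_add_iff 1).mpr
      (summable_geometric_of_lt_one (norm_nonneg _) hq)).mul_right R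
  have hP := hu.hasProdLocallyUniformlyOn_nat_one_add (K := Metric.ball (0 : ℂ) R)
    (f := fun (n : ℕ) (y : ℂ) => -(q ^ (n + 1) * y)) Metric.isOpen_ball
    (.of_forall fun n y hy => by
      rw [norm_neg, norm_mul, norm_pow]
      gcongr
      exact (mem_ball_zero_iff.mp hy).le)
    (fun n => by fun_prop)
  have hd := hP.differentiableOn
    (.of_forall fun _ => by
      simpa [Finset.prod_fn] using DifferentiableOn.finsetProd (fun _ _ => by fun_prop))
    Metric.isOpen_ball
  have hx : Metric.ball (0 : ℂ) R ∈ 𝓝 x :=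
    Metric.isOpen_ball.mem_nhds (mem_ball_zero_iff.mpr (lt_add_one _))
  have he : qProd q = fun y => ∏' n : ℕ, (1 + -(q ^ (n + 1) * y)) := by
    funext y
    simp [qProd, sub_eq_add_neg]
  rw [he]
  exact hd.differentiableAt hx

lemma th_eq {τ : ℂ} (hτ : 0 < τ.im) (t : ℂ) :
    th τ t = Complex.exp (Real.pi * I * τ / 4) * (2 * Complex.sin (Real.pi * t)) *
      qProd (jq τ) 1 * (qProd (jq τ) (Complex.exp (2 * Real.pi * I * t)) *
        qProd (jq τ) (Complex.exp (-(2 * Real.pi * I * t)))) := by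
  have hq := norm_jq_lt_one hτ
  unfold th jTheta
  rw [(multipliable_qProd hq _).tprod_mul (multipliable_qProd hq _)]
  simp only [qProd, mul_one]

lemma differentiable_th {τ : ℂ} (hτ : 0 < τ.im) : Differentiable ℂ (th τ) := by
  have hA := differentiable_qProd (norm_jq_lt_one hτ)
  have he : th τ = _ := funext (th_eq hτ)
  rw [he]
  have h1 : Differentiable ℂ fun t : ℂ => qProd (jq τ) (Complex.exp (2 * Real.pi * I * t)) :=
    hA.comp (by fun_prop)
  have h2 : Differentiable ℂ fun t : ℂ => qProd (jq τ) (Complex.exp (-(2 * Real.pi * I * t))) :=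
    hA.comp (by fun_prop)
  fun_prop

lemma th_neg {τ : ℂ} (hτ : 0 < τ.im) (t : ℂ) : th τ (-t) = -th τ t := by
  simp only [th_eq hτ, mul_neg, neg_neg, Complex.sin_neg]
  ring

lemma th_zero {τ : ℂ} : th τ 0 = 0 := by simp [th, jTheta]

lemma deriv_th_zero_ne_zero {τ : ℂ} (hτ : 0 < τ.im) : deriv (th τ) 0 ≠ 0 := by
  have hq := norm_jq_lt_one hτ
  have hA := differentiable_qProd hq
  have h1 : Differentiable ℂ fun t : ℂ => qProd (jq τ) (Complex.exp (2 * Real.pi * I * t)) :=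
    hA.comp (by fun_prop)
  have h2 : Differentiable ℂ fun t : ℂ => qProd (jq τ) (Complex.exp (-(2 * Real.pi * I * t))) :=
    hA.comp (by fun_prop)
  have hs : HasDerivAt (fun t : ℂ => Complex.sin (Real.pi * t)) (Real.pi : ℂ) 0 := by
    simpa using ((hasDerivAt_id (0 : ℂ)).const_mul (Real.pi : ℂ)).csin
  have h := ((((hs.const_mul 2).const_mul (Complex.exp (Real.pi * I * τ / 4))).mul_const
    (qProd (jq τ) 1)).mul ((h1 0).hasDerivAt.mul (h2 0).hasDerivAt))
  have he : th τ = _ := funext (th_eq hτ)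
  have h' : deriv (th τ) 0 = Complex.exp (Real.pi * I * τ / 4) * (2 * Real.pi) *
      qProd (jq τ) 1 * (qProd (jq τ) 1 * qProd (jq τ) 1) := by
    rw [he]
    refine (HasDerivAt.deriv h).trans ?_
    simp
  rw [h']
  have hA1 := qProd_one_ne_zero hq
  have hpi : (Real.pi : ℂ) ≠ 0 := by exact_mod_cast Real.pi_ne_zero
  have hexp := Complex.exp_ne_zero (Real.pi * I * τ / 4)
  exact mul_ne_zero (mul_ne_zero (mul_ne_zero hexp (mul_ne_zero two_ne_zero hpi)) hA1)
    (mul_ne_zero hA1 hA1)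

lemma deriv_zero_of_even {f : ℂ → ℂ} (hf : ∀ x, f (-x) = f x) : deriv f 0 = 0 := by
  have h : deriv (fun x => f (-x)) 0 = -deriv f (-0) := deriv_comp_neg f 0
  simp only [hf, neg_zero] at h
  exact self_eq_neg.mp h

lemma dslope_th_of_ne {τ x : ℂ} (hx : x ≠ 0) : dslope (th τ) 0 x = th τ x / x := by
  rw [dslope_of_ne _ hx, slope_def_field, th_zero, sub_zero, sub_zero]

lemma dslope_th_neg {τ : ℂ} (hτ : 0 < τ.im) (x : ℂ) :
    dslope (th τ) 0 (-x) = dslope (th τ) 0 x := by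
  rcases eq_or_ne x 0 with rfl | hx
  · simp
  · rw [dslope_th_of_ne hx, dslope_th_of_ne (neg_ne_zero.mpr hx), th_neg hτ, neg_div_neg_eq]

lemma differentiable_dslope_th {τ : ℂ} (hτ : 0 < τ.im) :
    Differentiable ℂ (dslope (th τ) 0) :=
  differentiableOn_univ.mp ((differentiableOn_dslope univ_mem).mpr
    (differentiable_th hτ).differentiableOn)

/-- The derivative at `0` of `f(2u - z) / f(u - z)²` vanishes, because the chain-rule factor `2` in
the numerator balances the exponent of the denominator. -/
lemma hasDerivAt_ratio {f : ℂ → ℂ} (hf : Differentiable ℂ f) {z : ℂ} (hz : f (-z) ≠ 0) :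
    HasDerivAt (fun u => f (2 * u - z) / f (u - z) ^ 2) 0 0 := by
  have hd : HasDerivAt f (deriv f (-z)) (-z) := (hf _).hasDerivAt
  have l1 : HasDerivAt (fun u : ℂ => 2 * u - z) 2 0 := by
    simpa using ((hasDerivAt_id (0 : ℂ)).const_mul 2).sub_const z
  have l2 : HasDerivAt (fun u : ℂ => u - z) 1 0 := (hasDerivAt_id (0 : ℂ)).sub_const z
  have h1 : HasDerivAt (fun u => f (2 * u - z)) (deriv f (-z) * 2) 0 :=
    HasDerivAt.comp (0 : ℂ) (by simpa using hd) l1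
  have h2 : HasDerivAt (fun u => f (u - z)) (deriv f (-z) * 1) 0 :=
    HasDerivAt.comp (0 : ℂ) (by simpa using hd) l2
  have h := h1.div (h2.pow 2) (by simpa using hz)
  refine h.congr_deriv ?_
  simp only [mul_zero, zero_sub, Pi.pow_apply]
  field_simp
  ring

/-- If `a₁ + a₂ = −2`, then `G` extends holomorphically across `u = 0` and the derivative
of the extension at `u = 0` vanishes: this is the vanishing of the relative elliptic genus
`Ell(ℙ¹, a₁p₁ + a₂p₂; z, τ)`. -/
theorem G_deriv_zero (τ z a₁ a₂ : ℂ) (hτ : 0 < τ.im) (ha : a₁ + a₂ = -2)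
    (hz : ¬ inLat τ z) (ha₁ : ¬ inLat τ ((a₁ + 1) * z)) :
    ∃ g : ℂ → ℂ, ∃ ε > 0,
      DifferentiableOn ℂ g (Metric.ball (0 : ℂ) ε) ∧
      (∀ u ∈ Metric.ball (0 : ℂ) ε, u ≠ 0 → g u = G₁₅ τ z a₁ a₂ u) ∧
      deriv g 0 = 0 := by
  have hb : (a₂ + 1) * z = -((a₁ + 1) * z) := by linear_combination z * ha
  set b : ℂ := (a₁ + 1) * z with hbdef
  rcases eq_or_ne (th τ z) 0 with hz0 | hz0
  · exact ⟨fun _ => 0, 1, one_pos, by fun_prop, fun u _ _ => by simp [G₁₅, hz0], by simp⟩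
  have hth := differentiable_th hτ
  have hD := differentiable_dslope_th hτ
  have hnz : th τ (-z) ≠ 0 := by rw [th_neg hτ]; exact neg_ne_zero.mpr hz0
  have hD0 : dslope (th τ) 0 (2 * 0) ≠ 0 := by
    rw [mul_zero, dslope_same]
    exact deriv_th_zero_ne_zero hτ
  have c1 : Differentiable ℂ fun u : ℂ => dslope (th τ) 0 (2 * u) := hD.comp (by fun_prop)
  have c2 : Differentiable ℂ fun u : ℂ => th τ (u - z) := hth.comp (by fun_prop)
  have c3 : Differentiable ℂ fun u : ℂ => th τ (2 * u - z) := hth.comp (by fun_prop)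
  have c4 : Differentiable ℂ fun u : ℂ => th τ (u - b) := hth.comp (by fun_prop)
  have c5 : Differentiable ℂ fun u : ℂ => th τ (u + b) := hth.comp (by fun_prop)
  have hev : ∀ᶠ u in 𝓝 (0 : ℂ), dslope (th τ) 0 (2 * u) ≠ 0 ∧ th τ (u - z) ≠ 0 :=
    (c1.continuous.continuousAt.eventually_ne hD0).and
      (c2.continuous.continuousAt.eventually_ne (by simpa using hnz))
  obtain ⟨ε, hε, hball⟩ := Metric.eventually_nhds_iff_ball.mp hev
  -- `e` collects the even factors of `G`, together with the constants.
  set e : ℂ → ℂ := fun u => (dslope (th τ) 0 (2 * u))⁻¹ *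
    (th τ (u - b) * th τ (u + b) * (th τ z ^ 2 / (th τ b * th τ (-b)))) with he
  have heven : ∀ u, e (-u) = e u := by
    intro u
    have h1 : 2 * -u = -(2 * u) := by ring
    have h2 : -u - b = -(u + b) := by ring
    have h3 : -u + b = -(u - b) := by ring
    simp only [he]
    rw [h1, h2, h3, dslope_th_neg hτ, th_neg hτ, th_neg hτ]
    ring
  have hediff : ∀ u ∈ Metric.ball (0 : ℂ) ε, DifferentiableAt ℂ e u := fun u hu =>
    ((c1 u).inv (hball u hu).1).mul (((c4 u).mul (c5 u)).mul_const _)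
  refine ⟨fun u => e u * (th τ (2 * u - z) / th τ (u - z) ^ 2), ε, hε, ?_, ?_, ?_⟩
  · intro u hu
    exact ((hediff u hu).mul ((c3 u).div ((c2 u).pow 2)
      (pow_ne_zero 2 (hball u hu).2))).differentiableWithinAt
  · intro u _ hu
    have h2u : (2 * u) ≠ 0 := mul_ne_zero two_ne_zero hu
    simp only [he, G₁₅]
    rw [← hbdef, hb, dslope_th_of_ne h2u, inv_div, sub_neg_eq_add]
    simp only [div_eq_mul_inv, mul_inv]
    ring
  · have h1 : HasDerivAt e 0 0 := by
      have h := (hediff 0 (Metric.mem_ball_self hε)).hasDerivAt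
      rwa [deriv_zero_of_even heven] at h
    exact (h1.mul (hasDerivAt_ratio hth hnz)).deriv.trans (by simp)
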